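/- Let p be a prime with p ≠ 2 and p ≠ 5 satisfying p ≡ ±2 (mod 5), let a and n be positive integers with a odd, p ∣ n, and n ≢ 0 (mod z(p)), and let r = p^a n mod z(p), s = n mod z(p), and A = ⌊n(p^a − 1)/(p^{ν_p(n)}·z(p))⌋. If r ≠ s, then p divides C(p^a n, n)_F. If r = s, then p divides C(p^a n, n)_F if and only if s_p(A) ≥ ((a + 1)/2)(p − 1). -/

import Mathlib

/-!
The proof computes the `p`-adic valuation of the Fibonomial coefficient by a Legendre-type formula.

Since `p ≡ ±2 (mod 5)`, `5` is a non-residue modulo `p`, so Frobenius interchanges the roots of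
`x² = x + 1` and `p ∣ F_{p+1}` (`fib_prime_add_one`); hence `z = z(p)` divides `p + 1` and is prime
to `p`. Lifting the exponent gives `ν_p(F_{zk}) = ν_p(F_z) + ν_p(k)` (`val_fib_rank_mul`), so
`ν_p(F_1 ⋯ F_N) = ν_p(F_z) ⌊N/z⌋ + ν_p(⌊N/z⌋!)` (`val_fibProd`). Consequently `p ∣ C(m,k)_F` as soon
as there is a carry `⌊m/z⌋ ≠ ⌊k/z⌋ + ⌊(m-k)/z⌋`, and otherwise `p ∣ C(m,k)_F` if and only if `p`
divides the ordinary binomial coefficient `C(⌊m/z⌋, ⌊k/z⌋)` (`dvd_fibBinom_iff`).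

Take `m = p^a n`, `k = n`, `X = ⌊p^a n/z⌋`, `Y = ⌊n/z⌋`. As `a` is odd, `z ∣ p^a + 1`, whence
`r + s = z`. If `r < s` there is a carry. If `r > s`, write `p + 1 = z t`; since `p ∣ n`, the last
base-`p` digits of `X` and `Y` are `p - t r < p - t s`, and Lucas' theorem gives `p ∣ C(X, Y)`.
If `r = s`, then `2 s = z` and `2 X + 1 = p^a (2 Y + 1)`, so the base-`p` expansion of `X` is that of
`Y` followed by `a` digits `(p-1)/2`. Kummer's theorem then reads
`s_p(A) = (p-1) ν_p(C(X, Y)) + a (p-1)/2`, which is the asserted criterion because `a` is odd.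
-/

/-- The Fibonomial coefficient `C(m,k)_F = (F_{m-k+1} ⋯ F_m)/(F_1 ⋯ F_k)`,
with `C(m,0)_F = 1` and `C(m,k)_F = 0` for `k > m`. -/
def fibBinom (m k : ℕ) : ℕ :=
  (∏ i ∈ Finset.range k, Nat.fib (m - i)) / ∏ i ∈ Finset.range k, Nat.fib (i + 1)

/-- The rank of appearance `z(n)`: the least positive `m` with `n ∣ F_m`. -/
noncomputable def fibRank (n : ℕ) : ℕ := sInf {m : ℕ | 0 < m ∧ n ∣ Nat.fib m}

/-- The sum of the digits of `n` in base `q`. -/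
def digitSum (q n : ℕ) : ℕ := (Nat.digits q n).sum

/-! ### The rank of appearance -/

/-- In an algebraic closure of `𝔽_p` let `d² = 5`. Euler's criterion gives `d^p = -d`, so Frobenius
exchanges the roots `α, β = (1 ± d)/2` of `x² = x + 1`, and `α^(p+1) = αβ = β^(p+1)`. -/
lemma fib_prime_add_one {p : ℕ} (hp : p.Prime) (hp2 : p ≠ 2)
    (hmod : p % 5 = 2 ∨ p % 5 = 3) : p ∣ Nat.fib (p + 1) := by
  have : Fact p.Prime := ⟨hp⟩
  have : Fact (Nat.Prime 5) := ⟨by norm_num⟩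
  have hp5 : p ≠ 5 := by rintro rfl; omega
  have hleg : legendreSym p 5 = -1 := by
    have h1 : legendreSym p ((5 : ℕ) : ℤ) = legendreSym 5 (p : ℤ) :=
      legendreSym.quadratic_reciprocity_one_mod_four (p := 5) (q := p) (by norm_num) hp2
    have h2 : legendreSym 5 (p : ℤ) = -1 := by
      rw [legendreSym.mod]
      have h3 : ((p : ℤ) % ((5 : ℕ) : ℤ)) = ((p % 5 : ℕ) : ℤ) := by push_cast; rfl
      rw [h3]
      rcases hmod with h | h <;> rw [h] <;> clear * - <;> decide +revert
    rw [h2] at h1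
    exact_mod_cast h1
  have heul : (5 : ZMod p) ^ (p / 2) = -1 := by
    have h := legendreSym.eq_pow p 5
    rw [hleg] at h
    push_cast at h
    exact h.symm
  let K := AlgebraicClosure (ZMod p)
  have : CharP K p := charP_of_injective_algebraMap (algebraMap (ZMod p) K).injective p
  obtain ⟨d, hd⟩ := IsAlgClosed.exists_pow_nat_eq (5 : K) (n := 2) (by norm_num)
  have hodd : p = 2 * (p / 2) + 1 := by
    rcases hp.eq_two_or_odd with h | h <;> omega
  have heulK : (5 : K) ^ (p / 2) = -1 := by
    have h := congrArg (algebraMap (ZMod p) K) heul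
    rw [map_pow, map_neg, map_one, map_ofNat] at h
    exact h
  have hdp : d ^ p = -d := by
    have h : d ^ (2 * (p / 2) + 1) = -d := by
      rw [pow_succ, pow_mul, hd, heulK]; ring
    rwa [← hodd] at h
  have h2K : (2 : K) ≠ 0 := by
    intro h
    have : p ∣ 2 := (CharP.cast_eq_zero_iff K p 2).1 (by exact_mod_cast h)
    exact hp2 ((Nat.prime_dvd_prime_iff_eq hp Nat.prime_two).1 this)
  have h5K : (5 : K) ≠ 0 := by
    intro h
    have : p ∣ 5 := (CharP.cast_eq_zero_iff K p 5).1 (by exact_mod_cast h)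
    exact hp5 ((Nat.prime_dvd_prime_iff_eq hp (by norm_num)).1 this)
  have hd0 : d ≠ 0 := by rintro rfl; apply h5K; rw [← hd]; simp
  obtain ⟨α, hα⟩ : ∃ α : K, 2 * α = 1 + d := ⟨(1 + d) / 2, mul_div_cancel₀ _ h2K⟩
  obtain ⟨β, hβ⟩ : ∃ β : K, 2 * β = 1 - d := ⟨(1 - d) / 2, mul_div_cancel₀ _ h2K⟩
  have hsum : α + β = 1 := mul_left_cancel₀ h2K (by linear_combination hα + hβ)
  have hdiff : α - β = d := mul_left_cancel₀ h2K (by linear_combination hα - hβ)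
  have h4 : (4 : K) ≠ 0 := by
    have : (4 : K) = 2 * 2 := by norm_num
    rw [this]; exact mul_ne_zero h2K h2K
  have hprod : α * β = -1 := mul_left_cancel₀ h4 (by
    linear_combination 2 * β * hα + (1 + d) * hβ - hd)
  have hαp : α ^ p = β := by
    have h := congrArg (frobenius K p) hα
    rw [map_mul, map_add, map_one, map_ofNat, frobenius_def, frobenius_def, hdp] at h
    exact mul_left_cancel₀ h2K (by linear_combination h - hβ)
  have hβp : β ^ p = α := by
    have h := congrArg (frobenius K p) hβ
    rw [map_mul, map_sub, map_one, map_ofNat, frobenius_def, frobenius_def, hdp] at h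
    exact mul_left_cancel₀ h2K (by linear_combination h - hα)
  have hα2 : α ^ 2 = α + 1 := by linear_combination α * hsum - hprod
  have hβ2 : β ^ 2 = β + 1 := by linear_combination β * hsum - hprod
  have binet : ∀ k : ℕ, (Nat.fib k : K) * (α - β) = α ^ k - β ^ k ∧
      (Nat.fib (k + 1) : K) * (α - β) = α ^ (k + 1) - β ^ (k + 1) := by
    intro k
    induction k with
    | zero => simp
    | succ k ih =>
      refine ⟨ih.2, ?_⟩
      rw [Nat.fib_add_two]
      push_cast
      linear_combination ih.1 + ih.2 - α ^ k * hα2 + β ^ k * hβ2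
  have hfin := (binet p).2
  rw [pow_succ, pow_succ, hαp, hβp, hdiff] at hfin
  have h0 : (Nat.fib (p + 1) : K) * d = 0 := by rw [hfin]; ring
  rcases mul_eq_zero.1 h0 with h | h
  · exact (CharP.cast_eq_zero_iff K p _).1 h
  · exact absurd h hd0

lemma fibRank_spec {p : ℕ} {m : ℕ} (hm : 0 < m) (h : p ∣ Nat.fib m) :
    0 < fibRank p ∧ p ∣ Nat.fib (fibRank p) :=
  Nat.sInf_mem (s := {m : ℕ | 0 < m ∧ p ∣ Nat.fib m}) ⟨m, hm, h⟩

lemma fibRank_dvd_iff {p : ℕ} (hz : 0 < fibRank p) (h : p ∣ Nat.fib (fibRank p)) (m : ℕ) :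
    p ∣ Nat.fib m ↔ fibRank p ∣ m := by
  constructor
  · intro hm
    have hg : p ∣ Nat.fib (Nat.gcd (fibRank p) m) := by
      rw [Nat.fib_gcd]; exact Nat.dvd_gcd h hm
    have hle : fibRank p ≤ Nat.gcd (fibRank p) m :=
      Nat.sInf_le (s := {m : ℕ | 0 < m ∧ p ∣ Nat.fib m}) ⟨Nat.gcd_pos_of_pos_left _ hz, hg⟩
    have : Nat.gcd (fibRank p) m = fibRank p :=
      le_antisymm (Nat.le_of_dvd hz (Nat.gcd_dvd_left _ _)) hle
    exact this ▸ Nat.gcd_dvd_right _ _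
  · intro hm
    exact h.trans (Nat.fib_dvd _ _ hm)

/-! ### Lifting the exponent for Fibonacci numbers -/

/-- Expansion of `F_{nk}` and `F_{nk+1}` in powers of `F_n`, where `h` stands for `F_{n-1}`. The
factors `2 h²` and `h` clear the denominators of the binomial expansion. -/
lemma fib_mul_expand (n : ℕ) (x h : ℤ) (hx : (Nat.fib n : ℤ) = x)
    (hh : (Nat.fib (n + 1) : ℤ) = h + x) (k : ℕ) :
    ∃ b c e : ℤ, (Nat.fib (n * k) : ℤ) = x * b ∧
      h * (Nat.fib (n * k + 1) : ℤ) = h ^ (k + 1) + k * x * h ^ k + c * x ^ 2 ∧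
      2 * h ^ 2 * (Nat.fib (n * k) : ℤ)
        = 2 * k * x * h ^ (k + 1) + k * (k - 1) * x ^ 2 * h ^ k + e * x ^ 3 := by
  induction k with
  | zero => exact ⟨0, 0, 0, by simp⟩
  | succ k ih =>
    obtain ⟨b, c, e, h1, h2, h3⟩ := ih
    have hv : (Nat.fib (n * (k + 1) + 1) : ℤ)
        = Nat.fib (n * k) * x + Nat.fib (n * k + 1) * (h + x) := by
      rw [← hh, ← hx, mul_add, mul_one, Nat.fib_add]
      push_cast
      rfl
    have hu : (Nat.fib (n * (k + 1)) : ℤ)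
        = Nat.fib (n * k) * h + Nat.fib (n * k + 1) * x := by
      have e1 : (Nat.fib (n * k + 1 + n + 1) : ℤ)
          = Nat.fib (n * k + 1) * Nat.fib n + Nat.fib (n * k + 2) * Nat.fib (n + 1) := by
        exact_mod_cast Nat.fib_add (n * k + 1) n
      have e2 : (Nat.fib (n * k + 1 + n + 1) : ℤ)
          = Nat.fib (n * (k + 1)) + Nat.fib (n * (k + 1) + 1) := by
        have : n * k + 1 + n + 1 = n * (k + 1) + 2 := by ring
        rw [this, Nat.fib_add_two]; push_cast; ring
      have e3 : (Nat.fib (n * k + 2) : ℤ) = Nat.fib (n * k) + Nat.fib (n * k + 1) := by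
        exact_mod_cast Nat.fib_add_two
      rw [e2, e3, hv, hx, hh] at e1
      linear_combination e1
    refine ⟨b * h + Nat.fib (n * k + 1), b * h + k * h ^ k + c * (h + x),
      e * h + 2 * h * c, ?_, ?_, ?_⟩
    · rw [hu, h1]; ring
    · rw [hv, h1]; push_cast; linear_combination (h + x) * h2
    · rw [hu]; push_cast; linear_combination h * h3 + 2 * h * x * h2

lemma val_of_mul_eq {p : ℕ} [Fact p.Prime] {u x i : ℕ} {a b : ℤ} (hu : u ≠ 0) (hx : x ≠ 0)
    (ha : ¬ (p : ℤ) ∣ a) (hb : ¬ (p : ℤ) ∣ b)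
    (h : a * u = x * (p : ℤ) ^ i * b) : padicValNat p u = padicValNat p x + i := by
  have hp0 : (p : ℤ) ≠ 0 := by exact_mod_cast (Fact.out : p.Prime).ne_zero
  have ha0 : a ≠ 0 := by rintro rfl; exact ha (dvd_zero _)
  have hb0 : b ≠ 0 := by rintro rfl; exact hb (dvd_zero _)
  have hu0 : (u : ℤ) ≠ 0 := by exact_mod_cast hu
  have hx0 : (x : ℤ) ≠ 0 := by exact_mod_cast hx
  have h' := congrArg (padicValInt p) h
  rw [padicValInt.mul ha0 hu0, padicValInt.mul (mul_ne_zero hx0 (pow_ne_zero _ hp0)) hb0,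
    padicValInt.mul hx0 (pow_ne_zero _ hp0), padicValInt.eq_zero_of_not_dvd ha,
    padicValInt.eq_zero_of_not_dvd hb, padicValInt.of_nat, padicValInt.of_nat,
    ← Nat.cast_pow, padicValInt.of_nat, padicValNat.prime_pow] at h'
  omega

section LTE

variable {p : ℕ} [Fact p.Prime] (hp2 : p ≠ 2) {n : ℕ} (hn : 0 < n) (hpn : p ∣ Nat.fib n)

include hpn in
lemma not_dvd_fib_pred :
    ¬ (p : ℤ) ∣ ((Nat.fib (n + 1) : ℤ) - Nat.fib n) := by
  intro h
  have hd : (p : ℤ) ∣ (Nat.fib n : ℤ) := by exact_mod_cast hpn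
  have h1 : (p : ℤ) ∣ (Nat.fib (n + 1) : ℤ) := by
    have := dvd_add h hd
    rwa [sub_add_cancel] at this
  have h2 : p ∣ Nat.fib (n + 1) := by exact_mod_cast h1
  have h3 := Nat.dvd_gcd hpn h2
  rw [Nat.fib_coprime_fib_succ n] at h3
  exact (Fact.out : p.Prime).one_lt.ne' (Nat.dvd_one.1 h3)

include hp2 in
lemma not_dvd_two : ¬ (p : ℤ) ∣ 2 := by
  intro h
  have : p ∣ 2 := by exact_mod_cast h
  exact hp2 ((Nat.prime_dvd_prime_iff_eq Fact.out Nat.prime_two).1 this)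

include hp2 hn hpn in
lemma val_fib_mul_of_not_dvd {k : ℕ} (hk : ¬ p ∣ k) :
    padicValNat p (Nat.fib (n * k)) = padicValNat p (Nat.fib n) := by
  have hP : Prime (p : ℤ) := Nat.prime_iff_prime_int.1 Fact.out
  have hk0 : 0 < k := Nat.pos_of_ne_zero (by rintro rfl; exact hk (dvd_zero _))
  have hnh := not_dvd_fib_pred hpn
  have h2 := not_dvd_two hp2
  obtain ⟨b, c, e, -, -, h3⟩ :=
    fib_mul_expand n (Nat.fib n) ((Nat.fib (n + 1) : ℤ) - Nat.fib n) rfl (by ring) k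
  have hd : (p : ℤ) ∣ (Nat.fib n : ℤ) := by exact_mod_cast hpn
  generalize ((Nat.fib (n + 1) : ℤ) - Nat.fib n) = h at hnh h3
  have key := val_of_mul_eq (p := p) (u := Nat.fib (n * k)) (x := Nat.fib n) (i := 0)
    (a := 2 * h ^ 2)
    (b := 2 * k * h ^ (k + 1) + Nat.fib n * (k * (k - 1) * h ^ k + e * Nat.fib n))
    (Nat.fib_pos.2 (Nat.mul_pos hn hk0)).ne' (Nat.fib_pos.2 hn).ne' ?_ ?_ ?_
  · simpa using key
  · intro hc
    rcases hP.dvd_or_dvd hc with hc | hc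
    · exact h2 hc
    · exact hnh (hP.dvd_of_dvd_pow hc)
  · intro hc
    rw [dvd_add_left (Dvd.dvd.mul_right hd _)] at hc
    rcases hP.dvd_or_dvd hc with hc | hc
    · rcases hP.dvd_or_dvd hc with hc | hc
      · exact h2 hc
      · exact hk (by exact_mod_cast hc)
    · exact hnh (hP.dvd_of_dvd_pow hc)
  · rw [h3]; ring

include hp2 hn hpn in
lemma val_fib_mul_prime :
    padicValNat p (Nat.fib (n * p)) = padicValNat p (Nat.fib n) + 1 := by
  have hP : Prime (p : ℤ) := Nat.prime_iff_prime_int.1 Fact.out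
  have hnh := not_dvd_fib_pred hpn
  have h2 := not_dvd_two hp2
  obtain ⟨b, c, e, -, -, h3⟩ :=
    fib_mul_expand n (Nat.fib n) ((Nat.fib (n + 1) : ℤ) - Nat.fib n) rfl (by ring) p
  have hd : (p : ℤ) ∣ (Nat.fib n : ℤ) := by exact_mod_cast hpn
  generalize ((Nat.fib (n + 1) : ℤ) - Nat.fib n) = h at hnh h3
  obtain ⟨y, hy⟩ := hd
  refine val_of_mul_eq (p := p) (a := 2 * h ^ 2)
    (b := 2 * h ^ (p + 1) + p * ((p - 1) * y * h ^ p + e * y ^ 2))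
    (Nat.fib_pos.2 (Nat.mul_pos hn (Fact.out : p.Prime).pos)).ne' (Nat.fib_pos.2 hn).ne' ?_ ?_ ?_
  · intro hc
    rcases hP.dvd_or_dvd hc with hc | hc
    · exact h2 hc
    · exact hnh (hP.dvd_of_dvd_pow hc)
  · intro hc
    rw [dvd_add_left (dvd_mul_right _ _)] at hc
    rcases hP.dvd_or_dvd hc with hc | hc
    · exact h2 hc
    · exact hnh (hP.dvd_of_dvd_pow hc)
  · rw [h3, hy]; ring

include hp2 hn hpn in
lemma val_fib_rank_mul (k : ℕ) (hk : 0 < k) :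
    padicValNat p (Nat.fib (n * k)) = padicValNat p (Nat.fib n) + padicValNat p k := by
  induction k using Nat.strong_induction_on with
  | _ k ih =>
    by_cases h : p ∣ k
    · obtain ⟨j, rfl⟩ := h
      have hp : p.Prime := Fact.out
      have hj : 0 < j := Nat.pos_of_mul_pos_left hk
      have hlt : j < p * j := by nlinarith [hp.two_le]
      have e1 : n * (p * j) = n * j * p := by ring
      rw [e1, val_fib_mul_prime hp2 (Nat.mul_pos hn hj)
        (hpn.trans (Nat.fib_dvd _ _ (dvd_mul_right _ _))), ih j hlt hj,
        padicValNat.mul hp.ne_zero hj.ne', padicValNat_self]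
      ring
    · rw [val_fib_mul_of_not_dvd hp2 hn hpn h, padicValNat.eq_zero_of_not_dvd h, add_zero]

end LTE

/-! ### Fibonomial coefficients -/

/-- The Fibonacci factorial `F_1 F_2 ⋯ F_N`. -/
def fibProd (N : ℕ) : ℕ := ∏ i ∈ Finset.range N, Nat.fib (i + 1)

lemma fibProd_succ (N : ℕ) : fibProd (N + 1) = fibProd N * Nat.fib (N + 1) :=
  Finset.prod_range_succ _ _

lemma fibProd_pos (N : ℕ) : 0 < fibProd N :=
  Finset.prod_pos fun i _ => Nat.fib_pos.2 (Nat.succ_pos i)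

/-- Integrality of the Fibonomial coefficients, by the Pascal-type identity
`F_{a+b+2} = F_{a+1} F_{b+2} + F_a F_{b+1}`. -/
lemma fibProd_mul_dvd : ∀ a b : ℕ, fibProd a * fibProd b ∣ fibProd (a + b)
  | 0, b => by simp [fibProd]
  | a + 1, 0 => by simp [fibProd]
  | a + 1, b + 1 => by
    have h1 := fibProd_mul_dvd a (b + 1)
    have h2 := fibProd_mul_dvd (a + 1) b
    have e1 : a + (b + 1) = a + b + 1 := by ring
    have e2 : a + 1 + b = a + b + 1 := by ring
    have e3 : a + 1 + (b + 1) = a + b + 1 + 1 := by ring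
    have e4 : Nat.fib (a + b + 1 + 1)
        = Nat.fib (a + 1) * Nat.fib (b + 2) + Nat.fib (b + 1) * Nat.fib a := by
      have := Nat.fib_add a (b + 1)
      rw [show a + (b + 1) + 1 = a + b + 1 + 1 by ring] at this
      rw [this]; ring
    rw [e1] at h1
    rw [e2] at h2
    rw [e3, fibProd_succ (a + b + 1), e4, mul_add]
    refine dvd_add ?_ ?_
    · rw [← mul_assoc, fibProd_succ a]
      refine Dvd.dvd.mul_right ?_ _
      have := mul_dvd_mul_right h1 (Nat.fib (a + 1))
      rwa [mul_right_comm] at this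
    · rw [← mul_assoc, fibProd_succ b]
      refine Dvd.dvd.mul_right ?_ _
      have := mul_dvd_mul_right h2 (Nat.fib (b + 1))
      rwa [mul_assoc] at this

lemma fibProd_eq (k l : ℕ) :
    (∏ i ∈ Finset.range k, Nat.fib (k + l - i)) * fibProd l = fibProd (k + l) := by
  induction k with
  | zero => simp
  | succ k ih =>
    rw [Finset.prod_range_succ', show k + 1 + l = k + l + 1 by ring, fibProd_succ, ← ih]
    have : ∀ i, k + l + 1 - (i + 1) = k + l - i := by intro i; omega
    simp only [this, Nat.sub_zero]
    ring

lemma fibBinom_mul (k l : ℕ) : fibBinom (k + l) k * (fibProd k * fibProd l) = fibProd (k + l) := by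
  have h := fibProd_mul_dvd k l
  rw [← fibProd_eq k l] at h
  have h' := Nat.dvd_of_mul_dvd_mul_right (fibProd_pos l) h
  rw [← fibProd_eq k l, ← mul_assoc]
  congr 1
  exact Nat.div_mul_cancel h'

section Val

variable {p : ℕ} [Fact p.Prime] (hp2 : p ≠ 2)
  (hz : 0 < fibRank p) (hpz : p ∣ Nat.fib (fibRank p))

include hp2 hz hpz in
/-- Legendre's formula for Fibonacci factorials. -/
lemma val_fibProd (N : ℕ) :
    padicValNat p (fibProd N) = padicValNat p (Nat.fib (fibRank p)) * (N / fibRank p)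
      + padicValNat p (N / fibRank p).factorial := by
  induction N with
  | zero => simp [fibProd]
  | succ N ih =>
    rw [fibProd_succ, padicValNat.mul (fibProd_pos N).ne' (Nat.fib_pos.2 (Nat.succ_pos N)).ne', ih,
      Nat.succ_div]
    split_ifs with h
    · have e1 : N + 1 = fibRank p * (N / fibRank p + 1) := by
        have := Nat.succ_div_of_dvd h
        rw [← this, Nat.mul_div_cancel' h]
      have e2 : padicValNat p (Nat.fib (N + 1))
          = padicValNat p (Nat.fib (fibRank p)) + padicValNat p (N / fibRank p + 1) := by
        conv_lhs => rw [e1]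
        exact val_fib_rank_mul hp2 hz hpz _ (Nat.succ_pos _)
      rw [e2, Nat.factorial_succ,
        padicValNat.mul (Nat.succ_ne_zero _) (Nat.factorial_ne_zero _)]
      ring
    · have : ¬ p ∣ Nat.fib (N + 1) := fun hc => h ((fibRank_dvd_iff hz hpz _).1 hc)
      rw [padicValNat.eq_zero_of_not_dvd this]
      simp

include hp2 hz hpz in
/-- A carry at the place `z(p)` forces `p ∣ C(k+l,k)_F`; without one, divisibility is that of an
ordinary binomial coefficient. -/
lemma dvd_fibBinom_iff (k l : ℕ) :
    p ∣ fibBinom (k + l) k ↔ ((k + l) / fibRank p = k / fibRank p + l / fibRank p →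
      p ∣ ((k + l) / fibRank p).choose (k / fibRank p)) := by
  have hmul := fibBinom_mul k l
  have hC : fibBinom (k + l) k ≠ 0 := by
    intro h
    rw [h, zero_mul] at hmul
    exact (fibProd_pos _).ne hmul
  have hv := congrArg (padicValNat p) hmul
  rw [padicValNat.mul hC (mul_pos (fibProd_pos k) (fibProd_pos l)).ne',
    padicValNat.mul (fibProd_pos k).ne' (fibProd_pos l).ne', val_fibProd hp2 hz hpz,
    val_fibProd hp2 hz hpz, val_fibProd hp2 hz hpz] at hv
  have he : 1 ≤ padicValNat p (Nat.fib (fibRank p)) :=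
    one_le_padicValNat_of_dvd (Nat.fib_pos.2 hz).ne' hpz
  rw [dvd_iff_padicValNat_ne_zero hC]
  generalize padicValNat p (Nat.fib (fibRank p)) = e at hv he
  have hle : k / fibRank p + l / fibRank p ≤ (k + l) / fibRank p :=
    Nat.div_add_div_le_add_div
  generalize k / fibRank p = Y at *
  generalize l / fibRank p = W at *
  generalize (k + l) / fibRank p = X at *
  have hfac : padicValNat p Y.factorial + padicValNat p W.factorial
      + padicValNat p ((Y + W).choose Y) = padicValNat p (Y + W).factorial := by
    rw [← Nat.add_choose_mul_factorial_mul_factorial Y W, ← Nat.choose_symm_add,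
      padicValNat.mul (mul_ne_zero (Nat.choose_pos (Nat.le_add_right _ _)).ne'
        (Nat.factorial_ne_zero _)) (Nat.factorial_ne_zero _),
      padicValNat.mul (Nat.choose_pos (Nat.le_add_right _ _)).ne' (Nat.factorial_ne_zero _)]
    ring
  by_cases hX : X = Y + W
  · subst hX
    rw [dvd_iff_padicValNat_ne_zero (Nat.choose_pos (Nat.le_add_right _ _)).ne']
    have : padicValNat p (fibBinom (k + l) k) = padicValNat p ((Y + W).choose Y) := by
      rw [mul_add] at hv
      omega
    simp [this]
  · simp only [hX, false_imp_iff, iff_true]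
    obtain ⟨d, rfl⟩ : ∃ d, X = Y + W + 1 + d := ⟨X - (Y + W + 1), by omega⟩
    have hmono : padicValNat p (Y + W).factorial ≤ padicValNat p (Y + W + 1 + d).factorial :=
      (padicValNat_dvd_iff_le (Nat.factorial_ne_zero _)).1
        (pow_padicValNat_dvd.trans (Nat.factorial_dvd_factorial (by omega)))
    have : e * (Y + W + 1 + d) = e * Y + e * W + e + e * d := by ring
    rw [this] at hv
    omega

end Val

/-! ### Base-`p` digits -/

lemma digitSum_mul_add {p q d : ℕ} (hp : 1 < p) (hd : d < p) :
    digitSum p (p * q + d) = d + digitSum p q := by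
  unfold digitSum
  by_cases h : d = 0 ∧ q = 0
  · simp [h.1, h.2]
  · rw [add_comm, Nat.digits_add p hp d q hd (by tauto)]
    simp

lemma digitSum_pow_mul {p : ℕ} (hp : 1 < p) (v q : ℕ) :
    digitSum p (p ^ v * q) = digitSum p q := by
  induction v with
  | zero => simp
  | succ v ih =>
    have := digitSum_mul_add (q := p ^ v * q) hp (d := 0) (by omega)
    rw [pow_succ', mul_assoc, ← ih]
    simpa using this

/-- If `2X + 1 = p^a (2Y + 1)`, the expansion of `X` in base `p = 2h + 1` is that of `Y` followed by
`a` digits equal to `h`. -/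
lemma digitSum_half {p h : ℕ} (hp : 1 < p) (hh : p = 2 * h + 1) (a X Y : ℕ)
    (hXY : 2 * X + 1 = p ^ a * (2 * Y + 1)) : digitSum p X = digitSum p Y + a * h := by
  induction a generalizing X with
  | zero =>
    have : X = Y := by simp at hXY; omega
    simp [this]
  | succ a ih =>
    have hodd : Odd (p ^ a * (2 * Y + 1)) :=
      Odd.mul (Odd.pow ⟨h, hh⟩) ⟨Y, rfl⟩
    obtain ⟨X', hX'⟩ := hodd
    have hX : X = p * X' + h := by
      rw [pow_succ', mul_assoc, hX'] at hXY
      have : p * (2 * X' + 1) = 2 * (p * X') + p := by ring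
      omega
    rw [hX, digitSum_mul_add hp (by omega), ih X' hX'.symm]
    ring

/-- Kummer's theorem, as an additive relation between digit sums. -/
lemma digitSum_add_digitSum {p : ℕ} [Fact p.Prime] (Y W : ℕ) :
    digitSum p Y + digitSum p W
      = (p - 1) * padicValNat p ((W + Y).choose Y) + digitSum p (W + Y) := by
  have hC : (W + Y).choose Y ≠ 0 := (Nat.choose_pos (Nat.le_add_left _ _)).ne'
  have h := congrArg (fun m => (p - 1) * padicValNat p m)
    (Nat.add_choose_mul_factorial_mul_factorial W Y)
  beta_reduce at h
  rw [padicValNat.mul (mul_ne_zero hC (Nat.factorial_ne_zero _)) (Nat.factorial_ne_zero _),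
    padicValNat.mul hC (Nat.factorial_ne_zero _), mul_add, mul_add,
    sub_one_mul_padicValNat_factorial, sub_one_mul_padicValNat_factorial,
    sub_one_mul_padicValNat_factorial] at h
  have h1 := Nat.digit_sum_le p Y
  have h2 := Nat.digit_sum_le p W
  have h3 := Nat.digit_sum_le p (W + Y)
  unfold digitSum
  omega

/-! ### The two cases -/

/-- If `p ∣ n` and `n = zX + r` with `p + 1 = zt`, the last base-`p` digit of `X` is `p - tr`. -/
lemma last_digit {p z t X r n : ℕ} (hzt : p + 1 = z * t) (hr0 : 0 < r) (hrz : r < z)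
    (hn : n = z * X + r) (hpn : p ∣ n) : X % p + t * r = p := by
  have ht : 0 < t := Nat.pos_of_ne_zero (by rintro rfl; simp at hzt)
  have hle : t * r ≤ p := by
    have : t * (r + 1) ≤ t * z := Nat.mul_le_mul_left t hrz
    nlinarith
  have hpos : 0 < t * r := Nat.mul_pos ht hr0
  have hd : p ∣ X + t * r := by
    have h1 : p ∣ t * n := Dvd.dvd.mul_left hpn t
    have h2 : t * n = p * X + (X + t * r) := by
      rw [hn]; linear_combination X * hzt.symm
    rw [h2] at h1
    exact (Nat.dvd_add_right (dvd_mul_right _ _)).1 h1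
  have hd' : p ∣ X % p + t * r := by
    rw [← Nat.mod_add_div X p, add_right_comm] at hd
    exact (Nat.dvd_add_left (dvd_mul_right _ _)).1 hd
  have hlt : X % p < p := Nat.mod_lt _ (by omega)
  obtain ⟨c, hc⟩ := hd'
  have hc1 : c = 1 := by
    have h0 : c ≠ 0 := by rintro rfl; simp at hc; omega
    have h2 : c < 2 := by
      by_contra hge
      have := Nat.mul_le_mul_left p (not_lt.1 hge)
      omega
    omega
  rw [hc, hc1, mul_one]

/-- Lucas' theorem, in the case of a borrow in the last digit. -/
lemma dvd_choose_of_mod_lt {p X Y : ℕ} (hp : p.Prime) (h : X % p < Y % p) : p ∣ X.choose Y := by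
  have : Fact p.Prime := ⟨hp⟩
  have := Choose.choose_modEq_choose_mod_mul_choose_div_nat (n := X) (k := Y) (p := p)
  rw [Nat.choose_eq_zero_of_lt h, zero_mul] at this
  exact (Nat.modEq_zero_iff_dvd).1 this

theorem prime_dvd_fibonomial_pm_two_a_odd_dvd
    (p a n : ℕ) (hp : p.Prime) (hp2 : p ≠ 2) (hp5 : p ≠ 5)
    (ha : 0 < a) (hn : 0 < n) (haodd : Odd a)
    (hmod : p % 5 = 2 ∨ p % 5 = 3)
    (hpn : p ∣ n) (hns : ¬ fibRank p ∣ n)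
    (r s A : ℕ)
    (hr : r = p ^ a * n % fibRank p)
    (hs : s = n % fibRank p)
    (hA : A = n * (p ^ a - 1) / (p ^ padicValNat p n * fibRank p)) :
    (r ≠ s → p ∣ fibBinom (p ^ a * n) n) ∧
    (r = s → (p ∣ fibBinom (p ^ a * n) n ↔
      ((a + 1) / 2) * (p - 1) ≤ digitSum p A)) := by
  have : Fact p.Prime := ⟨hp⟩
  have hfib := fib_prime_add_one hp hp2 hmod
  obtain ⟨hz, hpz⟩ := fibRank_spec (Nat.succ_pos p) hfib
  obtain ⟨t, hzt⟩ := (fibRank_dvd_iff hz hpz _).1 hfib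
  have hdig := dvd_fibBinom_iff hp2 hz hpz
  generalize fibRank p = z at *
  have hcop : Nat.Coprime p z := by
    have h1 : Nat.Coprime p (p + 1) := by simp
    exact h1.coprime_dvd_right ⟨t, hzt⟩
  have hpa : 1 ≤ p ^ a := Nat.one_le_pow _ _ hp.pos
  have hNM : p ^ a * n = n + n * (p ^ a - 1) := by
    obtain ⟨q, hq⟩ := Nat.exists_eq_add_of_le hpa
    rw [hq, Nat.add_sub_cancel_left]; ring
  have hrz : r < z := hr ▸ Nat.mod_lt _ hz
  have hsz : s < z := hs ▸ Nat.mod_lt _ hz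
  have hs0 : 0 < s := by
    rw [hs]; exact Nat.pos_of_ne_zero fun h => hns (Nat.dvd_of_mod_eq_zero h)
  have hN := Nat.div_add_mod (p ^ a * n) z
  have hn' := Nat.div_add_mod n z
  have hM := Nat.div_add_mod (n * (p ^ a - 1)) z
  have hMz : n * (p ^ a - 1) % z < z := Nat.mod_lt _ hz
  rw [← hr] at hN
  rw [← hs] at hn'
  -- `p ≡ -1 (mod z)` and `a` is odd
  have hrs : r + s = z := by
    have h1 : z ∣ p ^ a + 1 := by
      have h2 := Odd.nat_add_dvd_pow_add_pow p 1 haodd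
      rw [one_pow] at h2
      exact Dvd.dvd.trans ⟨t, hzt⟩ h2
    have h2 : z ∣ p ^ a * n + n := by
      have h3 : p ^ a * n + n = (p ^ a + 1) * n := by ring
      rw [h3]; exact h1.mul_right n
    have h3 : z ∣ r + s := by
      rw [← Nat.dvd_add_right (dvd_mul_right z (p ^ a * n / z + n / z))]
      have h4 : z * (p ^ a * n / z + n / z) + (r + s) = p ^ a * n + n := by
        rw [mul_add]; omega
      rwa [h4]
    obtain ⟨c, hc⟩ := h3
    have hc1 : c = 1 := by
      have h0 : c ≠ 0 := by rintro rfl; simp at hc; omega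
      have h2 : c < 2 := by
        by_contra hge
        have := Nat.mul_le_mul_left z (not_lt.1 hge)
        omega
      omega
    rw [hc, hc1, mul_one]
  have hdig' := hdig n (n * (p ^ a - 1))
  rw [← hNM] at hdig'
  rw [hdig']
  constructor
  · intro hne hX
    have hsr : s < r := by
      rw [hX, mul_add] at hN
      omega
    have hX' := last_digit hzt (by omega) hrz hN.symm (hpn.mul_left _)
    have hY' := last_digit hzt hs0 hsz hn'.symm hpn
    have ht : 0 < t := Nat.pos_of_ne_zero (by rintro rfl; simp at hzt)
    have hts : t * s < t * r := Nat.mul_lt_mul_of_pos_left hsr ht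
    exact dvd_choose_of_mod_lt hp (by omega)
  · intro heq
    have h2s : z = 2 * s := by omega
    have hle : n / z ≤ p ^ a * n / z :=
      Nat.div_le_div_right (Nat.le_mul_of_pos_left n hpa)
    have hMeq : n * (p ^ a - 1) = z * (p ^ a * n / z - n / z) := by
      have h3 := Nat.mul_le_mul_left z hle
      rw [Nat.mul_sub z]; omega
    have hW : n * (p ^ a - 1) / z = p ^ a * n / z - n / z := by
      rw [hMeq]; exact Nat.mul_div_cancel_left _ hz
    have hX : p ^ a * n / z = n / z + n * (p ^ a - 1) / z := by omega
    have hzW : n * (p ^ a - 1) = z * (n * (p ^ a - 1) / z) := by rw [hW]; exact hMeq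
    -- dividing by `p ^ ν_p(n)` only removes trailing zeros
    have hAW : digitSum p A = digitSum p (n * (p ^ a - 1) / z) := by
      have hdv : p ^ padicValNat p n ∣ n * (p ^ a - 1) / z := by
        have h1 : p ^ padicValNat p n ∣ z * (n * (p ^ a - 1) / z) := by
          rw [← hzW]; exact pow_padicValNat_dvd.mul_right _
        exact (hcop.pow_left _).dvd_of_dvd_mul_left h1
      rw [mul_comm (p ^ _) z, ← Nat.div_div_eq_div_mul] at hA
      rw [hA]
      conv_rhs => rw [← Nat.mul_div_cancel' hdv]
      exact (digitSum_pow_mul hp.one_lt _ _).symm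
    have hXY : 2 * (p ^ a * n / z) + 1 = p ^ a * (2 * (n / z) + 1) := by
      apply Nat.eq_of_mul_eq_mul_left hs0
      have e1 : s * (2 * (p ^ a * n / z) + 1) = z * (p ^ a * n / z) + r := by
        rw [heq]; linear_combination (p ^ a * n / z) * h2s.symm
      have e2 : s * (p ^ a * (2 * (n / z) + 1)) = p ^ a * (z * (n / z) + s) := by
        linear_combination (p ^ a * (n / z)) * h2s.symm
      rw [e1, e2, hN, hn']
    obtain ⟨h, hh⟩ := hp.odd_of_ne_two hp2
    obtain ⟨b, hb⟩ := haodd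
    have hdX := digitSum_half hp.one_lt hh a _ _ hXY
    have hh0 : 0 < h := by have := hp.one_lt; omega
    set Y := n / z
    set W := n * (p ^ a - 1) / z
    have hkum := digitSum_add_digitSum (p := p) Y W
    have hC : (W + Y).choose Y ≠ 0 := (Nat.choose_pos (Nat.le_add_left _ _)).ne'
    rw [hX, add_comm Y W] at hdX ⊢
    rw [dvd_iff_padicValNat_ne_zero hC, hAW, forall_prop_of_true rfl]
    generalize padicValNat p ((W + Y).choose Y) = v at hkum ⊢
    have hb2 : (a + 1) / 2 = b + 1 := by omega
    have hp1 : p - 1 = 2 * h := by omega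
    rw [hp1] at hkum ⊢
    rw [hb2]
    -- `s_p(W) = (2 v + a) h` with `a = 2 b + 1`
    have hsW : digitSum p W = 2 * h * v + (2 * b + 1) * h := by
      rw [← hb]; omega
    rw [hsW]
    constructor
    · intro hv
      have h1 : h * 1 ≤ h * v := Nat.mul_le_mul_left h (Nat.one_le_iff_ne_zero.2 hv)
      have h2 : (b + 1) * (2 * h) = (2 * b + 1) * h + h * 1 := by ring
      have h3 : 2 * h * v = h * v + h * v := by ring
      omega
    · intro hle0 hv
      have h2 : (b + 1) * (2 * h) = (2 * b + 1) * h + h := by ring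
      rw [hv, mul_zero] at hle0
      omega
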